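/- Let v be a sequence with k ≥ ||v|| and let r ≥ 1. Then Ex_r(v,k,n) and Ex_1(v,n) have the same asymptotic order: there exist constants c_1, c_2 > 0 such that for all n, Ex_r(v,k,n) ≤ c_1·Ex_1(v,n) and Ex_1(v,n) ≤ c_2·Ex_r(v,k,n). -/

import Mathlib

/-- `u` is `(k,r)`-sparse: for every `j`, the letters at positions
`j, j+r, ..., j+(k-1)r` (those within range) are pairwise distinct. -/
def ArithSparse (k r : ℕ) (u : List ℕ) : Prop :=
  ∀ j a b : ℕ, a < b → b < k → j + b * r < u.length →
    u.getD (j + a * r) 0 ≠ u.getD (j + b * r) 0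

/-- Two sequences are isomorphic if one is obtained from the other by a
bijective renaming of letters. -/
def Isomorphic (u v : List ℕ) : Prop := ∃ β : ℕ ≃ ℕ, v = u.map β

/-- `u` contains `v` if `u` has a subsequence isomorphic to `v`. -/
def Contains (u v : List ℕ) : Prop := ∃ w : List ℕ, w.Sublist u ∧ Isomorphic w v

/-- `Ex v k r n` is the maximum length of a `v`-free, `(k,r)`-sparse sequence
using at most `n` distinct letters. -/
noncomputable def Ex (v : List ℕ) (k r n : ℕ) : ℕ :=
  sSup {l : ℕ | ∃ u : List ℕ,
    u.length = l ∧ ¬ Contains u v ∧ ArithSparse k r u ∧ u.toFinset.card ≤ n}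

/-! Thin a `v`-free sequence greedily, keeping a letter only if it differs from the `W` letters kept
most recently. For large `W` the kept letters form a sequence as sparse as desired, and each run of
dropped letters uses at most `W` letters, so its length is bounded by a constant depending on `W`
but not on `n`. Hence any two sparsity conditions give extremal functions of the same order.

That constant is finite: a long sparse sequence contains many disjoint blocks with at least `‖v‖`
distinct letters each, many of these blocks have the same letter set by the pigeonhole principle,
and `v` can be copied into them one letter per block. -/

section Lists

variable {α : Type*}

lemma sublist_flatten_of_forall_subset {w : List α} {L : List (List α)}
    (hL : w.length ≤ L.length) (hw : ∀ B ∈ L, w ⊆ B) : w.Sublist L.flatten := by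
  induction w generalizing L with
  | nil => exact List.nil_sublist _
  | cons a w ih =>
    obtain _ | ⟨B, L⟩ := L
    · simp at hL
    · have ha : a ∈ B := hw B List.mem_cons_self List.mem_cons_self
      have hwL : ∀ C ∈ L, w ⊆ C := fun C hC =>
        List.subset_of_cons_subset (hw C (List.mem_cons_of_mem B hC))
      exact (List.singleton_sublist.2 ha).append (ih (Nat.le_of_succ_le_succ hL) hwL)

lemma sublist_flatten_of_length_le_count [DecidableEq α] {w : List α} {L : List (List α)}
    {T : Finset α} (hw : ∀ x ∈ w, x ∈ T) (hT : w.length ≤ (L.map List.toFinset).count T) :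
    w.Sublist L.flatten := by
  have hblocks : w.Sublist (L.filter fun B => B.toFinset == T).flatten := by
    refine sublist_flatten_of_forall_subset ?_ fun B hB x hx => ?_
    · rwa [List.count, List.countP_map, List.countP_eq_length_filter] at hT
    · rw [← List.mem_toFinset, eq_of_beq (List.mem_filter.1 hB).2]
      exact hw x hx
  exact hblocks.trans List.filter_sublist.flatten

lemma toFinset_subset_of_subset [DecidableEq α] {l l' : List α} (h : l ⊆ l') :
    l.toFinset ⊆ l'.toFinset :=
  Multiset.toFinset_subset.2 h

lemma exists_lt_count_of_card_mul_lt_length [DecidableEq α] {l : List α} {s : Finset α} {b : ℕ}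
    (hl : ∀ a ∈ l, a ∈ s) (hb : s.card * b < l.length) : ∃ a ∈ s, b < l.count a := by
  apply Finset.exists_lt_of_sum_lt
  have hcount : ∑ a ∈ s, l.count a = l.length := by
    simpa using Multiset.sum_count_eq_card (m := (l : Multiset α)) hl
  rwa [Finset.sum_const, smul_eq_mul, hcount]

lemma exists_flatten_prefix_of_mul_le_length {m q : ℕ} {u : List α} (h : q * m ≤ u.length) :
    ∃ L : List (List α), L.length = q ∧ L.flatten <+: u ∧ ∀ B ∈ L, B.length = m := by
  have hlength : (u.take (q * m)).length = (List.replicate q m).sum := by simpa using h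
  refine ⟨(List.replicate q m).splitLengths (u.take (q * m)), by simp, ?_, fun B hB => ?_⟩
  · rw [List.flatten_splitLengths _ _ hlength.le]
    exact List.take_prefix _ _
  · have hB' := List.mem_map_of_mem (f := List.length) hB
    rw [List.map_splitLengths_length _ _ hlength.ge] at hB'
    exact List.eq_of_mem_replicate hB'

end Lists

section Thinning

variable {α : Type*} [DecidableEq α]

/-- Greedy thinning of a sequence, read from right to left: a letter is kept if it differs from the
`W` letters kept most recently, so that equal kept letters end up more than `W` places apart. -/
def thin (W : ℕ) : List α → List α
  | [] => []
  | a :: u => if a ∈ (thin W u).take W then thin W u else a :: thin W u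

lemma thin_sublist (W : ℕ) (u : List α) : (thin W u).Sublist u := by
  induction u with
  | nil => exact List.Sublist.refl _
  | cons a u ih =>
    rw [thin]
    split_ifs
    · exact ih.cons a
    · exact ih.cons_cons a

lemma length_add_mul_length_tail_le {W C : ℕ} {s w : List α} (hs : s ⊆ w.take (W + 1))
    (hC : s.toFinset.card ≤ W + 1 → s.length ≤ C) :
    s.length + C * w.tail.length ≤ C * w.length := by
  have hcard : s.toFinset.card ≤ W + 1 :=
    calc s.toFinset.card ≤ (w.take (W + 1)).toFinset.card :=
          Finset.card_le_card (toFinset_subset_of_subset hs)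
      _ ≤ (w.take (W + 1)).length := List.toFinset_card_le _
      _ ≤ W + 1 := List.length_take_le _ _
  cases w with
  | nil => simp [List.subset_nil.1 hs]
  | cons a w =>
    rw [List.tail_cons, List.length_cons, Nat.mul_succ, Nat.add_comm]
    exact Nat.add_le_add_left (hC hcard) _

-- The run `s` consists of the last letter kept and the letters dropped since then.
lemma exists_prefix_subset_take_thin {W C : ℕ} {u : List α}
    (hC : ∀ s, s <:+: u → s.toFinset.card ≤ W + 1 → s.length ≤ C) :
    ∃ s, s <+: u ∧ s ⊆ (thin W u).take (W + 1) ∧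
      u.length ≤ s.length + C * (thin W u).tail.length := by
  induction u with
  | nil => exact ⟨[], by simp [thin]⟩
  | cons a u ih =>
    obtain ⟨s, hsu, hs, hlen⟩ := ih fun s hs => hC s (hs.trans (List.suffix_cons a u).isInfix)
    rw [thin]
    split_ifs with ha
    · refine ⟨a :: s, (List.prefix_cons_inj a).2 hsu, List.cons_subset.2 ⟨?_, hs⟩, ?_⟩
      · exact (List.take_subset_take_left _ W.le_succ) ha
      · simp only [List.length_cons]
        omega
    · refine ⟨[a], by simp, by simp, ?_⟩
      have hu : u.length ≤ C * (thin W u).length :=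
        hlen.trans (length_add_mul_length_tail_le hs
          (hC s (hsu.isInfix.trans (List.suffix_cons a u).isInfix)))
      simpa [Nat.add_comm] using hu

lemma length_le_mul_length_thin {W C : ℕ} {u : List α}
    (hC : ∀ s, s <:+: u → s.toFinset.card ≤ W + 1 → s.length ≤ C) :
    u.length ≤ C * (thin W u).length := by
  obtain ⟨s, hsu, hs, hlen⟩ := exists_prefix_subset_take_thin hC
  exact hlen.trans (length_add_mul_length_tail_le hs (hC s hsu.isInfix))

end Thinning

lemma Contains.mono {w u v : List ℕ} (hw : Contains w v) (hwu : w.Sublist u) : Contains u v := by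
  obtain ⟨x, hx, hxv⟩ := hw
  exact ⟨x, hx.trans hwu, hxv⟩

lemma contains_of_forall_sublist {T : Finset ℕ} {u v : List ℕ} (hT : v.toFinset.card ≤ T.card)
    (h : ∀ w : List ℕ, w.length = v.length → (∀ x ∈ w, x ∈ T) → w.Sublist u) : Contains u v := by
  obtain ⟨S, hST, hS⟩ := Finset.exists_subset_card_eq hT
  obtain ⟨β, hβ⟩ := Equiv.Perm.exists_map_finset_eq v.toFinset S hS.symm
  refine ⟨v.map β, h _ (List.length_map _) fun y hy => ?_, β.symm, by simp⟩
  obtain ⟨x, hx, rfl⟩ := List.mem_map.1 hy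
  exact hST (hβ ▸ Finset.mem_map_of_mem β.toEmbedding (List.mem_toFinset.2 hx))

namespace ArithSparse

variable {k r : ℕ} {s u : List ℕ}

lemma of_infix (hu : ArithSparse k r u) (hs : s <:+: u) : ArithSparse k r s := by
  obtain ⟨p, q, rfl⟩ := hs
  intro j a b hab hb hlen
  have hle : j + a * r ≤ j + b * r := by gcongr
  have hget : ∀ i < s.length, (p ++ s ++ q).getD (p.length + i) 0 = s.getD i 0 := by
    intro i hi
    rw [List.append_assoc, List.getD_append_right _ _ _ _ (Nat.le_add_right _ _),
      Nat.add_sub_cancel_left, List.getD_append _ _ _ _ hi]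
  rw [← hget _ hlen, ← hget _ (hle.trans_lt hlen), ← Nat.add_assoc, ← Nat.add_assoc]
  refine hu (p.length + j) a b hab hb ?_
  simp only [List.length_append]
  omega

lemma le_card_toFinset (hu : ArithSparse k r u) (hr : 1 ≤ r) (hlen : k * r ≤ u.length) :
    k ≤ u.toFinset.card := by
  have hlt : ∀ i < k, i * r < u.length := fun i hi =>
    (Nat.mul_lt_mul_of_pos_right hi hr).trans_le hlen
  have hne : ∀ i j, i < j → j < k → u.getD (i * r) 0 ≠ u.getD (j * r) 0 := fun i j hij hj => by
    simpa using hu 0 i j hij hj (by simpa using hlt j hj)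
  rw [← Finset.card_range k]
  refine Finset.card_le_card_of_injOn (fun i => u.getD (i * r) 0) (fun i hi => ?_)
    fun i hi j hj hij => ?_
  · have hi' := hlt i (by simpa using hi)
    simp [List.getElem?_eq_getElem hi']
  · simp only [Finset.coe_range, Set.mem_Iio] at hi hj
    rcases lt_trichotomy i j with h | h | h
    · exact absurd hij (hne i j h hj)
    · exact h
    · exact absurd hij.symm (hne j i h hi)

lemma of_mul_le {m : ℕ} (hu : ArithSparse m 1 u) (hr : 1 ≤ r) (hm : k * r ≤ m) :
    ArithSparse k r u := by
  intro j a b hab hb hlen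
  have hb' : b * r < m := (Nat.mul_lt_mul_of_pos_right hb hr).trans_le hm
  have hlt : a * r < b * r := Nat.mul_lt_mul_of_pos_right hab hr
  simpa using hu j (a * r) (b * r) hlt hb' (by simpa using hlen)

lemma cons {W a : ℕ} (hu : ArithSparse (W + 1) 1 u) (ha : a ∉ u.take W) :
    ArithSparse (W + 1) 1 (a :: u) := by
  intro j i i' hii' hi' hlen
  simp only [Nat.mul_one, List.length_cons] at hlen ⊢
  rcases Nat.eq_zero_or_pos (j + i) with hfirst | hpos
  · obtain ⟨d, hd⟩ : ∃ d, j + i' = d + 1 := ⟨i' - 1, by omega⟩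
    have hdu : d < u.length := by omega
    rw [hfirst, hd, List.getD_cons_zero, List.getD_cons_succ, List.getD_eq_getElem _ _ hdu]
    rintro rfl
    exact ha (List.mem_take_iff_getElem.2 ⟨d, by omega, rfl⟩)
  · obtain ⟨p, hp⟩ : ∃ p, j + i = p + 1 := ⟨j + i - 1, by omega⟩
    obtain ⟨d, rfl⟩ := Nat.exists_eq_add_of_lt hii'
    have hd : j + (i + d + 1) = p + (d + 1) + 1 := by omega
    rw [hp, hd, List.getD_cons_succ, List.getD_cons_succ]
    simpa using hu p 0 (d + 1) d.succ_pos (by omega) (by omega)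

end ArithSparse

lemma arithSparse_thin (W : ℕ) (u : List ℕ) : ArithSparse (W + 1) 1 (thin W u) := by
  induction u with
  | nil => exact fun j a b _ _ h => absurd h (Nat.not_lt_zero _)
  | cons a u ih =>
    rw [thin]
    split_ifs with ha
    · exact ih
    · exact ih.cons ha

section Extremal

variable {v u : List ℕ} {k r n : ℕ}

lemma ArithSparse.length_le_of_not_contains (hu : ArithSparse k r u) (hk : v.toFinset.card ≤ k)
    (hr : 1 ≤ r) (hv : ¬ Contains u v) (hn : u.toFinset.card ≤ n) :
    u.length ≤ (2 ^ n * v.length + 1) * (k * r) := by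
  by_contra! hlen
  obtain ⟨L, hL, hLu, hlength⟩ := exists_flatten_prefix_of_mul_le_length hlen.le
  have hBu : ∀ B ∈ L, B <:+: u := fun B hB => (List.infix_of_mem_flatten hB).trans hLu.isInfix
  have hsubset : ∀ T ∈ L.map List.toFinset, T ∈ u.toFinset.powerset := by
    simp only [List.forall_mem_map, Finset.mem_powerset]
    exact fun B hB => toFinset_subset_of_subset (hBu B hB).subset
  have hcard : u.toFinset.powerset.card * v.length < (L.map List.toFinset).length := by
    rw [Finset.card_powerset, List.length_map, hL, Nat.lt_succ_iff]
    exact Nat.mul_le_mul_right _ (Nat.pow_le_pow_right two_pos hn)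
  obtain ⟨T, -, hT⟩ := exists_lt_count_of_card_mul_lt_length hsubset hcard
  obtain ⟨B, hB, rfl⟩ := List.mem_map.1 (List.count_pos_iff.1 (Nat.zero_lt_of_lt hT))
  have hBcard : v.toFinset.card ≤ B.toFinset.card :=
    hk.trans ((hu.of_infix (hBu B hB)).le_card_toFinset hr (hlength B hB).ge)
  refine hv (contains_of_forall_sublist hBcard fun w hwlen hw => ?_)
  exact (sublist_flatten_of_length_le_count hw (hwlen.trans_le hT.le)).trans hLu.sublist

lemma length_le_Ex (hk : v.toFinset.card ≤ k) (hr : 1 ≤ r) (hv : ¬ Contains u v)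
    (hu : ArithSparse k r u) (hn : u.toFinset.card ≤ n) : u.length ≤ Ex v k r n := by
  refine le_csSup ⟨(2 ^ n * v.length + 1) * (k * r), ?_⟩ ⟨u, rfl, hv, hu, hn⟩
  rintro _ ⟨w, rfl, hwv, hw, hwn⟩
  exact hw.length_le_of_not_contains hk hr hwv hwn

lemma Ex_le_mul_Ex {k' r' : ℕ} (hk : v.toFinset.card ≤ k) (hr : 1 ≤ r)
    (hk' : v.toFinset.card ≤ k') (hr' : 1 ≤ r') (n : ℕ) :
    Ex v k r n ≤ Ex v k r (k' * r' + 1) * Ex v k' r' n := by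
  refine csSup_le' ?_
  rintro _ ⟨u, rfl, hv, hu, hn⟩
  have hthin : (thin (k' * r') u).length ≤ Ex v k' r' n := by
    have hsub := thin_sublist (k' * r') u
    refine length_le_Ex hk' hr' (fun h => hv (h.mono hsub)) ?_ ?_
    · exact (arithSparse_thin _ u).of_mul_le hr' (Nat.le_succ _)
    · exact (Finset.card_le_card (toFinset_subset_of_subset hsub.subset)).trans hn
  calc u.length ≤ Ex v k r (k' * r' + 1) * (thin (k' * r') u).length :=
        length_le_mul_length_thin fun s hs hcard =>
          length_le_Ex hk hr (fun h => hv (h.mono hs.sublist)) (hu.of_infix hs) hcard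
    _ ≤ Ex v k r (k' * r' + 1) * Ex v k' r' n := Nat.mul_le_mul_left _ hthin

end Extremal

theorem stmt_2_general (v : List ℕ) (k r k' r' : ℕ) (hk : v.toFinset.card ≤ k) (hr : 1 ≤ r)
    (hk' : v.toFinset.card ≤ k') (hr' : 1 ≤ r') :
    ∃ c₁ c₂ : ℕ, 0 < c₁ ∧ 0 < c₂ ∧
      (∀ n : ℕ, Ex v k r n ≤ c₁ * Ex v k' r' n) ∧
      (∀ n : ℕ, Ex v k' r' n ≤ c₂ * Ex v k r n) := by
  refine ⟨Ex v k r (k' * r' + 1) + 1, Ex v k' r' (k * r + 1) + 1, Nat.succ_pos _, Nat.succ_pos _,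
    fun n => ?_, fun n => ?_⟩
  · exact (Ex_le_mul_Ex hk hr hk' hr' n).trans (Nat.mul_le_mul_right _ (Nat.le_succ _))
  · exact (Ex_le_mul_Ex hk' hr' hk hr n).trans (Nat.mul_le_mul_right _ (Nat.le_succ _))

theorem stmt_2 (v : List ℕ) (k r : ℕ) (hk : v.toFinset.card ≤ k) (hr : 1 ≤ r) :
    ∃ c₁ c₂ : ℕ, 0 < c₁ ∧ 0 < c₂ ∧
      (∀ n : ℕ, Ex v k r n ≤ c₁ * Ex v v.toFinset.card 1 n) ∧
      (∀ n : ℕ, Ex v v.toFinset.card 1 n ≤ c₂ * Ex v k r n) :=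
  stmt_2_general v k r v.toFinset.card 1 hk hr le_rfl le_rfl
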